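/- The Hamiltonian flow preserves the Gibbs measure: let U : ℝ^p → ℝ be twice continuously differentiable, M a symmetric positive definite p×p real matrix, H(θ,r) = U(θ) + (1/2)·⟨r, M⁻¹ r⟩, and F(θ,r) = (M⁻¹ r, −∇U(θ)). Suppose φ : ℝ → (ℝ^p × ℝ^p) → (ℝ^p × ℝ^p) is a global flow of F, i.e. φ₀ = id, for every x the map t ↦ φₜ(x) is differentiable with derivative F(φₜ(x)), and each φₜ is a C¹ diffeomorphism. Then for every t, the map φₜ is measure-preserving for the measure μ on ℝ^p × ℝ^p having density exp(−H(θ,r)) with respect to Lebesgue measure. -/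

import Mathlib

open scoped RealInnerProductSpace
open MeasureTheory

open Filter Metric Set Topology
open scoped Gradient NNReal

/-!
The vector field `(∇K r, -∇U θ)` of a separable Hamiltonian `U θ + K r` has off-diagonal derivative,
hence divergence zero, and it is tangent to the level sets of the energy. So the flow preserves
both the volume and the density `exp (-H)`.

Divergence zero gives volume preservation by Liouville's formula
`d/dt det (Dφ_t x) = tr (DF (φ_t x)) * det (Dφ_t x)`. The variational equation behind it,
`d/dt Dφ_t x = DF (φ_t x) ∘ Dφ_t x`, is usually obtained by exchanging the derivatives in `t` and
`x`, which needs joint smoothness of `φ`. Since only each `φ_t` is assumed differentiable, the group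
law is used instead to reduce it to `t = 0`, where it follows from the Grönwall estimate
`‖φ_t y - φ_t x - (y - x) - t • DF x (y - x)‖ ≤ ε t ‖y - x‖` for small `t ≥ 0` and `y` near `x`, and
from its analogue for the reversed flow.
-/

section Determinant

variable {𝕜 E : Type*} [NontriviallyNormedField 𝕜] [NormedAddCommGroup E] [NormedSpace 𝕜 E]
  [FiniteDimensional 𝕜 E]

lemma contDiff_continuousLinearMap_det [CompleteSpace 𝕜] {n : WithTop ℕ∞} :
    ContDiff 𝕜 n fun L : E →L[𝕜] E ↦ L.det := by
  let b := Module.finBasis 𝕜 E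
  have hentry (i j) : ContDiff 𝕜 n fun L : E →L[𝕜] E ↦
      LinearMap.toMatrix b b (L : E →ₗ[𝕜] E) i j := by
    simp_rw [LinearMap.toMatrix_apply]
    exact ((b.coord i).toContinuousLinearMap.comp
      (ContinuousLinearMap.apply 𝕜 E (b j))).contDiff
  simp_rw [ContinuousLinearMap.det, ← LinearMap.det_toMatrix b, Matrix.det_apply']
  exact ContDiff.sum fun σ _ ↦ contDiff_const.mul (contDiff_prod fun i _ ↦ hentry _ _)

lemma hasDerivAt_det_id_add_smul (L : E →L[𝕜] E) :
    HasDerivAt (fun r : 𝕜 ↦ (.id 𝕜 E + r • L : E →L[𝕜] E).det)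
      (LinearMap.trace 𝕜 E (L : E →ₗ[𝕜] E)) 0 := by
  let b := Module.finBasis 𝕜 E
  obtain ⟨q, hq⟩ : ∃ q : Polynomial 𝕜, ∀ r : 𝕜, (.id 𝕜 E + r • L : E →L[𝕜] E).det =
      1 + LinearMap.trace 𝕜 E (L : E →ₗ[𝕜] E) * r + q.eval r * r ^ 2 := by
    rw [LinearMap.trace_eq_matrix_trace 𝕜 b]
    refine ⟨_, fun r ↦ Eq.trans ?_ (Matrix.det_one_add_smul r _)⟩
    rw [ContinuousLinearMap.det, ← LinearMap.det_toMatrix b]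
    simp
  have hquadratic : HasDerivAt (fun r ↦ q.eval r * r ^ 2) 0 0 := by
    simpa using (q.hasDerivAt 0).fun_mul (hasDerivAt_pow 2 (0 : 𝕜))
  simpa only [hq, mul_one, add_zero] using
    (((hasDerivAt_id' (0 : 𝕜)).const_mul _).const_add 1).fun_add hquadratic

lemma hasDerivAt_det_of_comp [CompleteSpace 𝕜] {A : 𝕜 → E →L[𝕜] E} {L : E →L[𝕜] E} {t : 𝕜}
    (hA : HasDerivAt A (L ∘L A t) t) :
    HasDerivAt (fun s ↦ (A s).det) (LinearMap.trace 𝕜 E (L : E →ₗ[𝕜] E) * (A t).det) t := by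
  have hdet := (contDiff_continuousLinearMap_det (𝕜 := 𝕜) (E := E)).differentiable one_ne_zero
  -- `A` is tangent at `t` to the line `r ↦ (1 + r • L) ∘L A t`, on which `det` is multiplicative.
  have hline : HasDerivAt (fun r : 𝕜 ↦ (.id 𝕜 E + r • L) ∘L A t) (L ∘L A t) 0 := by
    simpa [ContinuousLinearMap.add_comp] using
      ((hasDerivAt_id (0 : 𝕜)).smul_const (L ∘L A t)).const_add (A t)
  have hfderiv : fderiv 𝕜 ContinuousLinearMap.det (A t) (L ∘L A t) =
      LinearMap.trace 𝕜 E (L : E →ₗ[𝕜] E) * (A t).det := by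
    have hmul : ∀ r : 𝕜, ((.id 𝕜 E + r • L) ∘L A t).det = (.id 𝕜 E + r • L).det * (A t).det :=
      fun r ↦ LinearMap.det_comp _ _
    refine ((hdet _).hasFDerivAt.comp_hasDerivAt_of_eq 0 hline (by simp)).unique ?_
    simpa only [Function.comp_def, hmul] using
      (hasDerivAt_det_id_add_smul L).mul_const (A t).det
  exact hfderiv ▸ (hdet (A t)).hasFDerivAt.comp_hasDerivAt t hA

end Determinant

lemma trace_prod_comp_snd_comp_fst {R M N : Type*} [CommRing R] [AddCommGroup M] [Module R M]
    [Module.Free R M] [Module.Finite R M] [AddCommGroup N] [Module R N] [Module.Free R N]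
    [Module.Finite R N] (f : N →ₗ[R] M) (g : M →ₗ[R] N) :
    LinearMap.trace R (M × N) ((f ∘ₗ .snd R M N).prod (g ∘ₗ .fst R M N)) = 0 := by
  have hsum : (f ∘ₗ .snd R M N).prod (g ∘ₗ .fst R M N) =
      .inl R M N ∘ₗ (f ∘ₗ .snd R M N) + .inr R M N ∘ₗ (g ∘ₗ .fst R M N) := by
    ext <;> simp
  rw [hsum, map_add, LinearMap.trace_comp_comm', LinearMap.trace_comp_comm' _ (.inr R M N)]
  simp [LinearMap.comp_assoc, LinearMap.snd_comp_inl, LinearMap.fst_comp_inr]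

lemma measurePreserving_withDensity_comp {α β : Type*} [MeasurableSpace α] [MeasurableSpace β]
    {μ : Measure α} {ν : Measure β} {f : α → β} (hf : MeasurePreserving f μ ν)
    {ρ : β → ENNReal} (hρ : Measurable ρ) :
    MeasurePreserving f (μ.withDensity (ρ ∘ f)) (ν.withDensity ρ) where
  measurable := hf.measurable
  map_eq := by
    ext s hs
    rw [Measure.map_apply hf.measurable hs, withDensity_apply _ (hf.measurable hs),
      withDensity_apply _ hs]
    exact hf.setLIntegral_comp_preimage hs hρ

lemma measurePreserving_of_abs_det_fderiv_eq_one {E : Type*} [NormedAddCommGroup E]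
    [NormedSpace ℝ E] [FiniteDimensional ℝ E] [MeasurableSpace E] [BorelSpace E]
    (μ : Measure E) [μ.IsAddHaarMeasure] {f : E → E} (hf : Differentiable ℝ f)
    (hbij : Function.Bijective f) (hdet : ∀ x, |(fderiv ℝ f x).det| = 1) :
    MeasurePreserving f μ μ where
  measurable := hf.continuous.measurable
  map_eq := by
    ext s hs
    have hs' : MeasurableSet (f ⁻¹' s) := hf.continuous.measurable hs
    have := lintegral_abs_det_fderiv_eq_addHaar_image μ hs'
      (fun x _ ↦ (hf x).hasFDerivAt.hasFDerivWithinAt) hbij.injective.injOn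
    simpa [hdet, image_preimage_eq s hbij.surjective, Measure.map_apply hf.continuous.measurable hs]
      using this

section IntegralCurve

variable {E : Type*} [NormedAddCommGroup E] [NormedSpace ℝ E] {F : E → E} {γ γ₁ γ₂ : ℝ → E}

lemma isIntegralCurve_eq_of_locallyLipschitz (hF : LocallyLipschitz F)
    (hγ₁ : IsIntegralCurve γ₁ fun _ ↦ F) (hγ₂ : IsIntegralCurve γ₂ fun _ ↦ F)
    (h0 : γ₁ 0 = γ₂ 0) : γ₁ = γ₂ := by
  ext t
  let I := Icc (-(|t| + 1)) (|t| + 1)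
  have hS : IsCompact (γ₁ '' I ∪ γ₂ '' I) :=
    (isCompact_Icc.image hγ₁.continuous).union (isCompact_Icc.image hγ₂.continuous)
  obtain ⟨K, hK⟩ := hF.locallyLipschitzOn.exists_lipschitzOnWith_of_compact hS
  refine ODE_solution_unique_of_mem_Ioo (fun _ _ ↦ hK) (t₀ := 0)
    ⟨by linarith [abs_nonneg t], by linarith [abs_nonneg t]⟩
    (fun s hs ↦ ⟨hγ₁ s, .inl (mem_image_of_mem γ₁ (Ioo_subset_Icc_self hs))⟩)
    (fun s hs ↦ ⟨hγ₂ s, .inr (mem_image_of_mem γ₂ (Ioo_subset_Icc_self hs))⟩) h0 ?_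
  exact ⟨by linarith [neg_abs_le t], by linarith [le_abs_self t]⟩

lemma mem_ball_of_isIntegralCurve {x : E} {r T : ℝ} {C : ℝ≥0} (hC : ∀ z ∈ ball x r, ‖F z‖ < C)
    (hγ : IsIntegralCurve γ fun _ ↦ F) (hr : dist (γ 0) x + C * T < r) {t : ℝ}
    (ht : t ∈ Icc 0 T) : γ t ∈ ball x r := by
  have hbarrier : ∀ s ∈ Icc 0 T, dist (γ 0) x + C * s < r := fun s hs ↦
    lt_of_le_of_lt (by have := hs.2; gcongr) hr
  have hle : ‖γ t - x‖ ≤ dist (γ 0) x + C * t := by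
    refine image_norm_le_of_norm_deriv_right_lt_deriv_boundary (f := fun s ↦ γ s - x)
      (f' := fun s ↦ F (γ s)) (B := fun s ↦ dist (γ 0) x + C * s) (B' := fun _ ↦ (C : ℝ))
      (fun s _ ↦ ((hγ s).sub_const x).continuousAt.continuousWithinAt)
      (fun s _ ↦ ((hγ s).sub_const x).hasDerivWithinAt) (by simp [dist_eq_norm])
      (fun s ↦ by simpa using ((hasDerivAt_id s).const_mul (C : ℝ)).const_add (dist (γ 0) x))
      (fun s hs heq ↦ hC _ ?_) ht
    rw [mem_ball_iff_norm, heq]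
    exact hbarrier s (Ico_subset_Icc_self hs)
  exact mem_ball_iff_norm.2 (hle.trans_lt (hbarrier t ht))

lemma norm_sub_le_of_isIntegralCurve {K : ℝ≥0} {S : Set E} (hF : LipschitzOnWith K F S)
    (hγ₁ : IsIntegralCurve γ₁ fun _ ↦ F) (hγ₂ : IsIntegralCurve γ₂ fun _ ↦ F)
    {t : ℝ} (ht : 0 ≤ t) (hS₁ : ∀ s ∈ Icc 0 t, γ₁ s ∈ S) (hS₂ : ∀ s ∈ Icc 0 t, γ₂ s ∈ S) :
    ‖γ₁ t - γ₂ t‖ ≤ Real.exp (K * t) * ‖γ₁ 0 - γ₂ 0‖ := by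
  have := dist_le_of_trajectories_ODE_of_mem (fun _ _ ↦ hF) hγ₁.continuous.continuousOn
    (fun s _ ↦ (hγ₁ s).hasDerivWithinAt) (fun s hs ↦ hS₁ s (Ico_subset_Icc_self hs))
    hγ₂.continuous.continuousOn (fun s _ ↦ (hγ₂ s).hasDerivWithinAt)
    (fun s hs ↦ hS₂ s (Ico_subset_Icc_self hs)) le_rfl t ⟨ht, le_rfl⟩
  rwa [sub_zero, dist_eq_norm, dist_eq_norm, mul_comm] at this

lemma norm_sub_sub_sub_le_of_isIntegralCurve {K : ℝ≥0} {S : Set E} (hF : LipschitzOnWith K F S)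
    (hγ₁ : IsIntegralCurve γ₁ fun _ ↦ F) (hγ₂ : IsIntegralCurve γ₂ fun _ ↦ F)
    {t : ℝ} (ht : 0 ≤ t) (hS₁ : ∀ s ∈ Icc 0 t, γ₁ s ∈ S) (hS₂ : ∀ s ∈ Icc 0 t, γ₂ s ∈ S) :
    ‖γ₁ t - γ₂ t - (γ₁ 0 - γ₂ 0)‖ ≤ K * t * Real.exp (K * t) * ‖γ₁ 0 - γ₂ 0‖ := by
  have hderiv_le : ∀ s ∈ Ico 0 t,
      ‖F (γ₁ s) - F (γ₂ s)‖ ≤ K * (Real.exp (K * t) * ‖γ₁ 0 - γ₂ 0‖) := fun s hs ↦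
    calc ‖F (γ₁ s) - F (γ₂ s)‖
      _ ≤ K * ‖γ₁ s - γ₂ s‖ :=
        hF.norm_sub_le (hS₁ s (Ico_subset_Icc_self hs)) (hS₂ s (Ico_subset_Icc_self hs))
      _ ≤ K * (Real.exp (K * s) * ‖γ₁ 0 - γ₂ 0‖) := by
        gcongr
        exact norm_sub_le_of_isIntegralCurve hF hγ₁ hγ₂ hs.1
          (fun u hu ↦ hS₁ u ⟨hu.1, hu.2.trans hs.2.le⟩)
          (fun u hu ↦ hS₂ u ⟨hu.1, hu.2.trans hs.2.le⟩)
      _ ≤ K * (Real.exp (K * t) * ‖γ₁ 0 - γ₂ 0‖) := by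
        have := hs.2.le
        gcongr
  calc ‖γ₁ t - γ₂ t - (γ₁ 0 - γ₂ 0)‖
    _ ≤ K * (Real.exp (K * t) * ‖γ₁ 0 - γ₂ 0‖) * (t - 0) :=
      norm_image_sub_le_of_norm_deriv_le_segment'
        (fun s _ ↦ ((hγ₁ s).fun_sub (hγ₂ s)).hasDerivWithinAt) hderiv_le t ⟨ht, le_rfl⟩
    _ = K * t * Real.exp (K * t) * ‖γ₁ 0 - γ₂ 0‖ := by ring

lemma norm_sub_linearization_le_of_isIntegralCurve {L : E →L[ℝ] E} {S : Set E} {c : ℝ≥0}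
    (hF : ApproximatesLinearOn F L S c)
    (hγ₁ : IsIntegralCurve γ₁ fun _ ↦ F) (hγ₂ : IsIntegralCurve γ₂ fun _ ↦ F)
    {t : ℝ} (ht : 0 ≤ t) (hS₁ : ∀ s ∈ Icc 0 t, γ₁ s ∈ S) (hS₂ : ∀ s ∈ Icc 0 t, γ₂ s ∈ S) :
    ‖γ₁ t - γ₂ t - (γ₁ 0 - γ₂ 0) - t • L (γ₁ 0 - γ₂ 0)‖ ≤
      (c + ‖L‖ * ((‖L‖ + c) * t)) * Real.exp ((‖L‖ + c) * t) * t * ‖γ₁ 0 - γ₂ 0‖ := by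
  let K : ℝ≥0 := ‖L‖₊ + c
  have hlip : LipschitzOnWith K F S := lipschitzOnWith_iff_restrict.2 hF.lipschitz
  let d : ℝ := ‖γ₁ 0 - γ₂ 0‖
  have hderiv_le : ∀ s ∈ Ico 0 t, ‖F (γ₁ s) - F (γ₂ s) - L (γ₁ 0 - γ₂ 0)‖ ≤
      (c + ‖L‖ * (K * t)) * Real.exp (K * t) * d := fun s hs ↦ by
    have hst : s ≤ t := hs.2.le
    have hS₁' : ∀ u ∈ Icc 0 s, γ₁ u ∈ S := fun u hu ↦ hS₁ u ⟨hu.1, hu.2.trans hst⟩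
    have hS₂' : ∀ u ∈ Icc 0 s, γ₂ u ∈ S := fun u hu ↦ hS₂ u ⟨hu.1, hu.2.trans hst⟩
    calc ‖F (γ₁ s) - F (γ₂ s) - L (γ₁ 0 - γ₂ 0)‖
      _ = ‖F (γ₁ s) - F (γ₂ s) - L (γ₁ s - γ₂ s) + L (γ₁ s - γ₂ s - (γ₁ 0 - γ₂ 0))‖ := by
        rw [map_sub L (γ₁ s - γ₂ s), sub_add_sub_cancel]
      _ ≤ c * ‖γ₁ s - γ₂ s‖ + ‖L‖ * ‖γ₁ s - γ₂ s - (γ₁ 0 - γ₂ 0)‖ :=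
        norm_add_le_of_le (hF _ (hS₁' s ⟨hs.1, le_rfl⟩) _ (hS₂' s ⟨hs.1, le_rfl⟩))
          (L.le_opNorm _)
      _ ≤ c * (Real.exp (K * s) * d) + ‖L‖ * (K * s * Real.exp (K * s) * d) := by
        gcongr
        · exact norm_sub_le_of_isIntegralCurve hlip hγ₁ hγ₂ hs.1 hS₁' hS₂'
        · exact norm_sub_sub_sub_le_of_isIntegralCurve hlip hγ₁ hγ₂ hs.1 hS₁' hS₂'
      _ ≤ c * (Real.exp (K * t) * d) + ‖L‖ * (K * t * Real.exp (K * t) * d) := by gcongr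
      _ = (c + ‖L‖ * (K * t)) * Real.exp (K * t) * d := by ring
  have hmean := norm_image_sub_le_of_norm_deriv_le_segment'
    (f := fun s ↦ γ₁ s - γ₂ s - s • L (γ₁ 0 - γ₂ 0))
    (fun s _ ↦ (((hγ₁ s).sub (hγ₂ s)).sub
      ((hasDerivAt_id s).smul_const (L (γ₁ 0 - γ₂ 0)))).hasDerivWithinAt)
    (by simpa only [one_smul] using hderiv_le) t ⟨ht, le_rfl⟩
  calc ‖γ₁ t - γ₂ t - (γ₁ 0 - γ₂ 0) - t • L (γ₁ 0 - γ₂ 0)‖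
    _ ≤ (c + ‖L‖ * (K * t)) * Real.exp (K * t) * d * t := by
      simpa [sub_right_comm] using hmean
    _ = _ := by simp only [K, d, NNReal.coe_add, coe_nnnorm]; ring

end IntegralCurve

/-- A global flow of the autonomous vector field `F`: `φ t x` is the position at time `t`, possibly
negative, of the point that starts at `x`. The group law is not a field: for locally Lipschitz `F`
it follows from uniqueness of integral curves. -/
structure IsGlobalFlow {E : Type*} [NormedAddCommGroup E] [NormedSpace ℝ E]
    (F : E → E) (φ : ℝ → E → E) : Prop where
  map_zero : φ 0 = id
  isIntegralCurve (x : E) : IsIntegralCurve (fun t ↦ φ t x) fun _ ↦ F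

namespace IsGlobalFlow

variable {E : Type*} [NormedAddCommGroup E] [NormedSpace ℝ E] {F : E → E} {φ : ℝ → E → E}

lemma reverse (hφ : IsGlobalFlow F φ) : IsGlobalFlow (-F) fun t ↦ φ (-t) where
  map_zero := by simpa using hφ.map_zero
  isIntegralCurve x := by
    simpa [Function.comp_def, Pi.smul_def, ← Pi.neg_def] using (hφ.isIntegralCurve x).comp_mul (-1)

lemma map_add (hφ : IsGlobalFlow F φ) (hF : LocallyLipschitz F) (s t : ℝ) :
    φ (s + t) = φ s ∘ φ t := by
  ext x
  refine congrFun (isIntegralCurve_eq_of_locallyLipschitz hF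
    ((hφ.isIntegralCurve x).comp_add t) (hφ.isIntegralCurve (φ t x)) ?_) s
  simp [hφ.map_zero]

lemma bijective (hφ : IsGlobalFlow F φ) (hF : LocallyLipschitz F) (t : ℝ) :
    Function.Bijective (φ t) := by
  refine Function.bijective_iff_has_inverse.2 ⟨φ (-t), fun x ↦ ?_, fun x ↦ ?_⟩ <;>
  rw [← Function.comp_apply (f := φ _), ← hφ.map_add hF] <;> simp [hφ.map_zero]

lemma exists_forall_mem_ball (hφ : IsGlobalFlow F φ) {x : E} (hF : ContinuousAt F x) {r : ℝ}
    (hr : 0 < r) : ∃ T > 0, ∃ δ > 0, ∀ y ∈ ball x δ, ∀ t ∈ Icc 0 T, φ t y ∈ ball x r := by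
  let C : ℝ≥0 := ‖F x‖₊ + 1
  obtain ⟨ρ, hρ, hball⟩ := Metric.eventually_nhds_iff_ball.1 <|
    hF.norm.eventually_lt_const (show ‖F x‖ < C by simp [C])
  refine ⟨min ρ r / (2 * C), by positivity, min ρ r / 2, by positivity, fun y hy t ht ↦ ?_⟩
  refine ball_subset_ball (min_le_right ρ r) <| mem_ball_of_isIntegralCurve
    (fun z hz ↦ hball z (ball_subset_ball (min_le_left ρ r) hz)) (hφ.isIntegralCurve y) ?_ ht
  have hC : (C : ℝ) ≠ 0 := by positivity
  have : (C : ℝ) * (min ρ r / (2 * C)) = min ρ r / 2 := by field_simp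
  rw [hφ.map_zero, id, this]
  linarith [mem_ball.1 hy]

lemma hasDerivWithinAt_fderiv_zero (hφ : IsGlobalFlow F φ) {x : E} {L : E →L[ℝ] E}
    (hF : HasStrictFDerivAt F L x) (hdiff : ∀ t, DifferentiableAt ℝ (φ t) x) :
    HasDerivWithinAt (fun t ↦ fderiv ℝ (φ t) x) L (Ici 0) 0 := by
  rw [hasDerivWithinAt_iff_isLittleO, Asymptotics.isLittleO_iff]
  intro ε hε
  let c : ℝ≥0 := ⟨ε / 2, by positivity⟩
  obtain ⟨S, hS, hlin⟩ := hF.approximates_deriv_on_nhds (c := c) (.inr (half_pos hε))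
  obtain ⟨r, hr, hrS⟩ := Metric.mem_nhds_iff.1 hS
  obtain ⟨T, hT, δ, hδ, hball⟩ := hφ.exists_forall_mem_ball hF.hasFDerivAt.continuousAt hr
  have hfactor : ∀ᶠ t in 𝓝[≥] (0 : ℝ),
      (c + ‖L‖ * ((‖L‖ + c) * t)) * Real.exp ((‖L‖ + c) * t) < ε := by
    refine nhdsWithin_le_nhds <|
      (Continuous.continuousAt (by fun_prop)).tendsto.eventually_lt_const ?_
    simpa using show (c : ℝ) < ε from half_lt_self hε
  filter_upwards [hfactor, Icc_mem_nhdsGE hT] with t hlt ht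
  have hL : HasFDerivAt (fun y ↦ φ t y - y - t • L y) (fderiv ℝ (φ t) x - .id ℝ E - t • L) x :=
    ((hdiff t).hasFDerivAt.sub (hasFDerivAt_id x)).sub (L.hasFDerivAt.const_smul t)
  have hle : ∀ᶠ y in 𝓝 x,
      ‖(φ t y - y - t • L y) - (φ t x - x - t • L x)‖ ≤ ε * ‖t‖ * ‖y - x‖ := by
    filter_upwards [ball_mem_nhds x hδ] with y hy
    have := norm_sub_linearization_le_of_isIntegralCurve (hlin.mono_set hrS)
      (hφ.isIntegralCurve y) (hφ.isIntegralCurve x) ht.1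
      (fun s hs ↦ hball y hy s ⟨hs.1, hs.2.trans ht.2⟩)
      (fun s hs ↦ hball x (mem_ball_self hδ) s ⟨hs.1, hs.2.trans ht.2⟩)
    simp only [hφ.map_zero, id] at this
    calc _ = ‖φ t y - φ t x - (y - x) - t • L (y - x)‖ := by
          rw [map_sub, smul_sub]; congr 1; abel
      _ ≤ _ := this
      _ ≤ ε * ‖t‖ * ‖y - x‖ := by
        rw [Real.norm_of_nonneg ht.1]
        gcongr
        exact ht.1
  simpa [hφ.map_zero] using hL.le_of_lip' (by positivity) hle

lemma hasDerivAt_fderiv_zero (hφ : IsGlobalFlow F φ) {x : E} {L : E →L[ℝ] E}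
    (hF : HasStrictFDerivAt F L x) (hdiff : ∀ t, DifferentiableAt ℝ (φ t) x) :
    HasDerivAt (fun t ↦ fderiv ℝ (φ t) x) L 0 := by
  have hbackward : HasDerivWithinAt (fun t ↦ fderiv ℝ (φ t) x) L (Iic 0) 0 := by
    have h := hφ.reverse.hasDerivWithinAt_fderiv_zero hF.neg fun t ↦ hdiff (-t)
    rw [← neg_zero] at h
    simpa [Function.comp_def] using h.scomp (0 : ℝ) (hasDerivWithinAt_neg 0 (Iic 0)) fun t ht ↦ by
      simpa using ht
  simpa [Iic_union_Ici] using hbackward.union (hφ.hasDerivWithinAt_fderiv_zero hF hdiff)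

lemma hasDerivAt_fderiv (hφ : IsGlobalFlow F φ) (hF : ContDiff ℝ 1 F)
    (hdiff : ∀ t, Differentiable ℝ (φ t)) (t : ℝ) (x : E) :
    HasDerivAt (fun s ↦ fderiv ℝ (φ s) x) (fderiv ℝ F (φ t x) ∘L fderiv ℝ (φ t) x) t := by
  have h := hφ.hasDerivAt_fderiv_zero (x := φ t x)
    (hF.contDiffAt.hasStrictFDerivAt one_ne_zero) fun s ↦ hdiff s _
  have hcocycle : ∀ s, fderiv ℝ (φ (s - t)) (φ t x) ∘L fderiv ℝ (φ t) x = fderiv ℝ (φ s) x :=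
    fun s ↦ by
      rw [← fderiv_comp _ (hdiff _ _) (hdiff _ _), ← hφ.map_add hF.locallyLipschitz,
        sub_add_cancel]
  rw [← sub_self t] at h
  simpa [hcocycle] using (h.comp_sub_const t t).clm_comp (hasDerivAt_const t (fderiv ℝ (φ t) x))

lemma comp_eq_of_fderiv_apply_eq_zero {G : Type*} [NormedAddCommGroup G] [NormedSpace ℝ G]
    (hφ : IsGlobalFlow F φ) {H : E → G} (hH : Differentiable ℝ H)
    (hHF : ∀ x, fderiv ℝ H x (F x) = 0) (t : ℝ) : H ∘ φ t = H := by
  ext x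
  have hderiv : ∀ s, HasDerivAt (fun s ↦ H (φ s x)) 0 s := fun s ↦
    hHF (φ s x) ▸ (hH (φ s x)).hasFDerivAt.comp_hasDerivAt s (hφ.isIntegralCurve x s)
  have hconst := is_const_of_deriv_eq_zero (fun s ↦ (hderiv s).differentiableAt)
    (fun s ↦ (hderiv s).deriv) t 0
  simpa [hφ.map_zero] using hconst

lemma hasDerivAt_det_fderiv [FiniteDimensional ℝ E] (hφ : IsGlobalFlow F φ) (hF : ContDiff ℝ 1 F)
    (hdiff : ∀ t, Differentiable ℝ (φ t)) (t : ℝ) (x : E) :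
    HasDerivAt (fun s ↦ (fderiv ℝ (φ s) x).det)
      (LinearMap.trace ℝ E (fderiv ℝ F (φ t x) : E →ₗ[ℝ] E) * (fderiv ℝ (φ t) x).det) t :=
  hasDerivAt_det_of_comp (hφ.hasDerivAt_fderiv hF hdiff t x)

lemma det_fderiv_eq_one_of_trace_fderiv_eq_zero [FiniteDimensional ℝ E] (hφ : IsGlobalFlow F φ)
    (hF : ContDiff ℝ 1 F) (hdiff : ∀ t, Differentiable ℝ (φ t))
    (hdiv : ∀ x, LinearMap.trace ℝ E (fderiv ℝ F x : E →ₗ[ℝ] E) = 0) (t : ℝ) (x : E) :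
    (fderiv ℝ (φ t) x).det = 1 := by
  have hderiv : ∀ s, HasDerivAt (fun s ↦ (fderiv ℝ (φ s) x).det) 0 s := fun s ↦ by
    simpa only [hdiv, zero_mul] using hφ.hasDerivAt_det_fderiv hF hdiff s x
  have hconst := is_const_of_deriv_eq_zero (fun s ↦ (hderiv s).differentiableAt)
    (fun s ↦ (hderiv s).deriv) t 0
  simpa [hφ.map_zero, ContinuousLinearMap.det] using hconst

lemma measurePreserving_of_trace_fderiv_eq_zero [FiniteDimensional ℝ E] [MeasurableSpace E]
    [BorelSpace E] (hφ : IsGlobalFlow F φ) (hF : ContDiff ℝ 1 F)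
    (hdiff : ∀ t, Differentiable ℝ (φ t))
    (hdiv : ∀ x, LinearMap.trace ℝ E (fderiv ℝ F x : E →ₗ[ℝ] E) = 0)
    (μ : Measure E) [μ.IsAddHaarMeasure] (t : ℝ) : MeasurePreserving (φ t) μ μ :=
  measurePreserving_of_abs_det_fderiv_eq_one μ (hdiff t) (hφ.bijective hF.locallyLipschitz t)
    fun x ↦ by rw [hφ.det_fderiv_eq_one_of_trace_fderiv_eq_zero hF hdiff hdiv, abs_one]

end IsGlobalFlow

section Hamiltonian

variable {V : Type*} [NormedAddCommGroup V] [InnerProductSpace ℝ V] [CompleteSpace V]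

/-- The Hamiltonian vector field `(θ, r) ↦ (∇K r, -∇U θ)` of the separable Hamiltonian
`H (θ, r) = U θ + K r`: its integral curves solve Hamilton's equations. Momenta are taken in `V`
itself rather than in its dual, the two being identified by the inner product. -/
noncomputable def hamiltonianField (U K : V → ℝ) (x : V × V) : V × V := (∇ K x.2, -∇ U x.1)

lemma contDiff_gradient {n : WithTop ℕ∞} {f : V → ℝ} (hf : ContDiff ℝ (n + 1) f) :
    ContDiff ℝ n (∇ f) :=
  (InnerProductSpace.toDual ℝ V).symm.contDiff.comp (hf.fderiv_right le_rfl)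

lemma gradient_half_inner_apply {P : V →L[ℝ] V} (hP : P.IsSymmetric) :
    ∇ (fun r ↦ (1 / 2) * ⟪r, P r⟫) = P := by
  refine gradient_eq fun r ↦ hasGradientAt_iff_hasFDerivAt.2 ?_
  have h := (hP.hasStrictFDerivAt_reApplyInnerSelf r).hasFDerivAt.const_mul (1 / 2)
  have hsmul : (1 / 2 : ℝ) • 2 • innerSL ℝ (P r) = InnerProductSpace.toDual ℝ V (P r) := by
    ext v
    simp
  simpa only [hsmul, ContinuousLinearMap.reApplyInnerSelf_apply, RCLike.re_to_real,
    real_inner_comm] using h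

variable {U K : V → ℝ}

lemma contDiff_hamiltonianField {n : WithTop ℕ∞} (hU : ContDiff ℝ (n + 1) U)
    (hK : ContDiff ℝ (n + 1) K) :
    ContDiff ℝ n (hamiltonianField U K) :=
  ((contDiff_gradient hK).comp contDiff_snd).prodMk ((contDiff_gradient hU).comp contDiff_fst).neg

lemma fderiv_hamiltonian_apply_hamiltonianField (hU : Differentiable ℝ U) (hK : Differentiable ℝ K)
    (x : V × V) :
    fderiv ℝ (fun y : V × V ↦ U y.1 + K y.2) x (hamiltonianField U K x) = 0 := by
  have h : HasFDerivAt (fun y : V × V ↦ U y.1 + K y.2)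
      (fderiv ℝ U x.1 ∘L .fst ℝ V V + fderiv ℝ K x.2 ∘L .snd ℝ V V) x :=
    ((hU x.1).hasFDerivAt.comp x hasFDerivAt_fst).add
      ((hK x.2).hasFDerivAt.comp x hasFDerivAt_snd)
  rw [h.fderiv]
  simp only [hamiltonianField, add_apply, ContinuousLinearMap.comp_apply,
    ContinuousLinearMap.coe_fst', ContinuousLinearMap.coe_snd']
  rw [← inner_gradient_left, ← inner_gradient_left, inner_neg_right,
    real_inner_comm, add_neg_cancel]

lemma trace_fderiv_hamiltonianField [FiniteDimensional ℝ V] (hU : ContDiff ℝ 2 U)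
    (hK : ContDiff ℝ 2 K) (x : V × V) :
    LinearMap.trace ℝ (V × V) (fderiv ℝ (hamiltonianField U K) x) = 0 := by
  have h : HasFDerivAt (hamiltonianField U K)
      ((fderiv ℝ (∇ K) x.2 ∘L .snd ℝ V V).prod (-(fderiv ℝ (∇ U) x.1 ∘L .fst ℝ V V))) x :=
    (((contDiff_gradient hK).differentiable one_ne_zero x.2).hasFDerivAt.comp x
      hasFDerivAt_snd).prodMk
    (((contDiff_gradient hU).differentiable one_ne_zero x.1).hasFDerivAt.comp x
      hasFDerivAt_fst).neg
  rw [h.fderiv]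
  exact trace_prod_comp_snd_comp_fst
    (fderiv ℝ (∇ K) x.2 : V →ₗ[ℝ] V) (-fderiv ℝ (∇ U) x.1 : V →ₗ[ℝ] V)

end Hamiltonian

theorem hamiltonian_flow_preserves_gibbs_measure_general
    {V : Type*} [NormedAddCommGroup V] [InnerProductSpace ℝ V] [CompleteSpace V]
    [FiniteDimensional ℝ V] [MeasurableSpace V] [BorelSpace V]
    {U K : V → ℝ} (hU : ContDiff ℝ 2 U) (hK : ContDiff ℝ 2 K) {φ : ℝ → V × V → V × V}
    (hφ : IsGlobalFlow (hamiltonianField U K) φ) (hdiff : ∀ t, Differentiable ℝ (φ t))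
    (μ : Measure (V × V)) [μ.IsAddHaarMeasure] (t : ℝ) :
    MeasurePreserving (φ t)
      (μ.withDensity fun x ↦ ENNReal.ofReal (Real.exp (-(U x.1 + K x.2))))
      (μ.withDensity fun x ↦ ENNReal.ofReal (Real.exp (-(U x.1 + K x.2)))) := by
  let H : V × V → ℝ := fun x ↦ U x.1 + K x.2
  have hH : ContDiff ℝ 2 H := (hU.comp contDiff_fst).add (hK.comp contDiff_snd)
  have hvolume : MeasurePreserving (φ t) μ μ :=
    hφ.measurePreserving_of_trace_fderiv_eq_zero (contDiff_hamiltonianField hU hK) hdiff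
      (trace_fderiv_hamiltonianField hU hK) μ t
  have henergy : H ∘ φ t = H :=
    hφ.comp_eq_of_fderiv_apply_eq_zero (hH.differentiable two_ne_zero)
      (fderiv_hamiltonian_apply_hamiltonianField (hU.differentiable two_ne_zero)
        (hK.differentiable two_ne_zero)) t
  have hdensity : (fun x ↦ ENNReal.ofReal (Real.exp (-H x))) ∘ φ t =
      fun x ↦ ENNReal.ofReal (Real.exp (-H x)) :=
    congrArg (fun E : V × V → ℝ ↦ fun x ↦ ENNReal.ofReal (Real.exp (-E x))) henergy
  simpa only [hdensity] using measurePreserving_withDensity_comp hvolume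
    (ρ := fun x ↦ ENNReal.ofReal (Real.exp (-H x))) (by have := hH.continuous; fun_prop)

/-- The Hamiltonian flow of `F(θ, r) = (M⁻¹ r, −∇U(θ))` preserves the Gibbs
measure with density `exp(−H(θ, r))` with respect to Lebesgue measure, where
`H(θ, r) = U(θ) + (1/2)⟨r, M⁻¹ r⟩`. -/
theorem hamiltonian_flow_preserves_gibbs_measure
    {p : ℕ} (U : EuclideanSpace ℝ (Fin p) → ℝ) (hU : ContDiff ℝ 2 U)
    (M : Matrix (Fin p) (Fin p) ℝ) (hMsymm : M.IsSymm) (hMpd : M.PosDef)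
    (H : EuclideanSpace ℝ (Fin p) × EuclideanSpace ℝ (Fin p) → ℝ)
    (hH : ∀ x : EuclideanSpace ℝ (Fin p) × EuclideanSpace ℝ (Fin p),
      H x = U x.1 + (1 / 2) * ⟪x.2, Matrix.toEuclideanLin M⁻¹ x.2⟫)
    (F : EuclideanSpace ℝ (Fin p) × EuclideanSpace ℝ (Fin p) →
      EuclideanSpace ℝ (Fin p) × EuclideanSpace ℝ (Fin p))
    (hF : ∀ x : EuclideanSpace ℝ (Fin p) × EuclideanSpace ℝ (Fin p),
      F x = (Matrix.toEuclideanLin M⁻¹ x.2, -(gradient U x.1)))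
    (φ : ℝ → (EuclideanSpace ℝ (Fin p) × EuclideanSpace ℝ (Fin p)) →
      EuclideanSpace ℝ (Fin p) × EuclideanSpace ℝ (Fin p))
    -- φ is a global flow of F:
    (hφ0 : φ 0 = id)
    (hφderiv : ∀ (x : EuclideanSpace ℝ (Fin p) × EuclideanSpace ℝ (Fin p)) (t : ℝ),
      HasDerivAt (fun s : ℝ => φ s x) (F (φ t x)) t)
    -- each φₜ is a C¹ diffeomorphism:
    (hφdiffeo : ∀ t : ℝ,
      ∃ ψ : (EuclideanSpace ℝ (Fin p) × EuclideanSpace ℝ (Fin p)) →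
        EuclideanSpace ℝ (Fin p) × EuclideanSpace ℝ (Fin p),
        ContDiff ℝ 1 (φ t) ∧ ContDiff ℝ 1 ψ ∧
        Function.LeftInverse ψ (φ t) ∧ Function.RightInverse ψ (φ t)) :
    ∀ t : ℝ,
      MeasurePreserving (φ t)
        (volume.withDensity fun x => ENNReal.ofReal (Real.exp (-(H x))))
        (volume.withDensity fun x => ENNReal.ofReal (Real.exp (-(H x)))) := by
  let P := LinearMap.toContinuousLinearMap (Matrix.toEuclideanLin M⁻¹)
  have hP : P.IsSymmetric := Matrix.isSymmetric_toEuclideanLin_iff.2 hMpd.isHermitian.inv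
  have hK : ContDiff ℝ 2 fun r ↦ (1 / 2) * ⟪r, P r⟫ :=
    contDiff_const.mul (contDiff_id.inner ℝ P.contDiff)
  obtain rfl : H = fun x ↦ U x.1 + (1 / 2) * ⟪x.2, P x.2⟫ := funext hH
  obtain rfl : F = hamiltonianField U fun r ↦ (1 / 2) * ⟪r, P r⟫ := funext fun x ↦ by
    rw [hF, hamiltonianField, gradient_half_inner_apply hP]; rfl
  have : Measure.IsAddHaarMeasure
      (volume : Measure (EuclideanSpace ℝ (Fin p) × EuclideanSpace ℝ (Fin p))) :=
    inferInstanceAs (volume.prod volume).IsAddHaarMeasure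
  exact hamiltonian_flow_preserves_gibbs_measure_general hU hK ⟨hφ0, hφderiv⟩
    (fun t ↦ (hφdiffeo t).choose_spec.1.differentiable one_ne_zero) volume
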